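/- Let d ≥ 1, t > 0, and let μ be a σ-finite Borel measure on ℝ^d with μ p_{2t} < ∞. Then sup_{h ≤ h' ≤ 2h} ∫_{ℝ^d} μ(dy) ∫_{ℝ^d} p_{h'}(z) | p_{t-h}(y - z) - p_t(y) | dz → 0 as h → 0⁺ (with 0 < h < t/2). -/

import Mathlib

open Filter MeasureTheory

/-- The standard Gaussian density `p_t(x) = (2πt)^{-d/2} exp(-|x|²/(2t))` on `ℝ^d`. -/
noncomputable def gaussDensity (d : ℕ) (t : ℝ) (x : EuclideanSpace ℝ (Fin d)) : ℝ :=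
  (2 * Real.pi * t) ^ (-(d : ℝ) / 2) * Real.exp (-‖x‖ ^ 2 / (2 * t))

lemma gaussDensity_nonneg' (d : ℕ) {t : ℝ} (ht : 0 < t) (x : EuclideanSpace ℝ (Fin d)) :
    0 ≤ gaussDensity d t x := by
  unfold gaussDensity
  positivity

lemma continuous_gaussDensity' (d : ℕ) (t : ℝ) : Continuous (gaussDensity d t) := by
  unfold gaussDensity
  fun_prop

lemma gauss_exp_bound (d : ℕ) {t h s : ℝ} (ht : 0 < t) (hh : 0 ≤ h) (hht : h < t / 2)
    (hs : 0 ≤ s) (hst : s ≤ t / 2) (y w : EuclideanSpace ℝ (Fin d)) :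
    gaussDensity d (t - h) (y - √s • w) ≤
      (Real.pi * t) ^ (-(d : ℝ) / 2) * Real.exp (-‖y‖ ^ 2 / (4 * t) + ‖w‖ ^ 2 / 4) := by
  have hth : 0 < t - h := by linarith
  unfold gaussDensity
  apply mul_le_mul _ _ (by positivity) (by positivity)
  · apply Real.rpow_le_rpow_of_nonpos (by positivity)
    · nlinarith [Real.pi_pos]
    · have : (0 : ℝ) ≤ d := by positivity
      linarith
  · apply Real.exp_le_exp.2
    have hY : ‖y‖ ^ 2 ≤ 2 * ‖y - √s • w‖ ^ 2 + 2 * (s * ‖w‖ ^ 2) := by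
      have h1 : ‖y‖ ≤ ‖y - √s • w‖ + ‖√s • w‖ := by
        simpa using norm_add_le (y - √s • w) (√s • w)
      have h2 : ‖√s • w‖ ^ 2 = s * ‖w‖ ^ 2 := by
        rw [norm_smul, mul_pow, Real.norm_eq_abs, sq_abs, Real.sq_sqrt hs]
      rw [← h2]
      nlinarith [norm_nonneg y, sq_nonneg (‖y - √s • w‖ - ‖√s • w‖)]
    set N := ‖y - √s • w‖ ^ 2
    have hN : 0 ≤ N := by positivity
    have hW : 0 ≤ ‖w‖ ^ 2 := by positivity
    set W := ‖w‖ ^ 2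
    set Y := ‖y‖ ^ 2
    calc -N / (2 * (t - h)) ≤ -N / (2 * t) := by
          rw [neg_div, neg_div, neg_le_neg_iff]
          gcongr
          linarith
      _ ≤ (-Y + t * W) / (4 * t) := by
          rw [div_le_div_iff₀ (by positivity) (by positivity)]
          nlinarith [mul_le_mul_of_nonneg_right hst hW]
      _ = _ := by field_simp

lemma gauss_dom (d : ℕ) {t h s : ℝ} (ht : 0 < t) (hh : 0 ≤ h) (hht : h < t / 2)
    (hs : 0 ≤ s) (hst : s ≤ t / 2) (y w : EuclideanSpace ℝ (Fin d)) :
    gaussDensity d 1 w * |gaussDensity d (t - h) (y - √s • w) - gaussDensity d t y| ≤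
      gaussDensity d (2 * t) y * ((2 * Real.pi * 1) ^ (-(d : ℝ) / 2) *
        (Real.pi * t) ^ (-(d : ℝ) / 2) / (2 * Real.pi * (2 * t)) ^ (-(d : ℝ) / 2) *
          Real.exp (-(1 / 4) * ‖w‖ ^ 2)) := by
  have h1 := gauss_exp_bound d ht hh hht hs hst y w
  have h2 : gaussDensity d t y ≤
      (Real.pi * t) ^ (-(d : ℝ) / 2) * Real.exp (-‖y‖ ^ 2 / (4 * t) + ‖w‖ ^ 2 / 4) := by
    simpa using gauss_exp_bound d (s := 0) ht le_rfl (by positivity) le_rfl (by positivity) y w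
  have n1 := gaussDensity_nonneg' d (t := t - h) (by linarith) (y - √s • w)
  have n2 := gaussDensity_nonneg' d ht y
  have h3 : |gaussDensity d (t - h) (y - √s • w) - gaussDensity d t y| ≤
      (Real.pi * t) ^ (-(d : ℝ) / 2) * Real.exp (-‖y‖ ^ 2 / (4 * t) + ‖w‖ ^ 2 / 4) := by
    rw [abs_le]; constructor <;> linarith
  refine (mul_le_mul_of_nonneg_left h3 (gaussDensity_nonneg' d one_pos w)).trans (le_of_eq ?_)
  have hD : 0 < (2 * Real.pi * (2 * t)) ^ (-(d : ℝ) / 2) := by positivity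
  unfold gaussDensity
  have e1 : Real.exp (-‖w‖ ^ 2 / (2 * 1)) * Real.exp (-‖y‖ ^ 2 / (4 * t) + ‖w‖ ^ 2 / 4)
      = Real.exp (-‖y‖ ^ 2 / (2 * (2 * t))) * Real.exp (-(1 / 4) * ‖w‖ ^ 2) := by
    rw [← Real.exp_add, ← Real.exp_add]; congr 1; field_simp; ring
  generalize (2 * Real.pi * (2 * t)) ^ (-(d : ℝ) / 2) = D at *
  generalize (2 * Real.pi * 1) ^ (-(d : ℝ) / 2) = A at *
  generalize (Real.pi * t) ^ (-(d : ℝ) / 2) = B at *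
  calc _ = A * B * (Real.exp (-‖w‖ ^ 2 / (2 * 1)) *
        Real.exp (-‖y‖ ^ 2 / (4 * t) + ‖w‖ ^ 2 / 4)) := by ring
    _ = _ := by rw [e1]; field_simp

lemma gauss_cov (d : ℕ) {s : ℝ} (hs : 0 < s) (g : EuclideanSpace ℝ (Fin d) → ℝ)
    (hg : Measurable g) :
    ∫⁻ z, ENNReal.ofReal (gaussDensity d s z * g z) =
      ∫⁻ w, ENNReal.ofReal (gaussDensity d 1 w * g (√s • w)) := by
  have hr : 0 < √s := Real.sqrt_pos.2 hs
  have hm : Measurable (gaussDensity d s) := (continuous_gaussDensity' d s).measurable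
  have key := Measure.map_addHaar_smul
    (volume : Measure (EuclideanSpace ℝ (Fin d))) hr.ne'
  have e : ∀ w, gaussDensity d 1 w * g (√s • w) =
      √s ^ d * (gaussDensity d s (√s • w) * g (√s • w)) := by
    intro w
    rw [← mul_assoc]; congr 1
    unfold gaussDensity
    rw [norm_smul, mul_pow, Real.norm_eq_abs, sq_abs, Real.sq_sqrt hs.le,
      Real.mul_rpow (by positivity : (0:ℝ) ≤ 2 * Real.pi) hs.le]
    have : √s ^ d * s ^ (-(d : ℝ) / 2) = 1 := by
      rw [Real.sqrt_eq_rpow, ← Real.rpow_natCast, ← Real.rpow_mul hs.le, ← Real.rpow_add hs]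
      ring_nf; simp
    have e2 : -(s * ‖w‖ ^ 2) / (2 * s) = -‖w‖ ^ 2 / (2 * 1) := by field_simp
    rw [e2, mul_one]
    linear_combination (-(2 * Real.pi) ^ (-(d : ℝ) / 2) * Real.exp (-‖w‖ ^ 2 / (2 * 1))) * this
  simp_rw [e, ENNReal.ofReal_mul (by positivity : 0 ≤ √s ^ d)]
  rw [lintegral_const_mul _ (by fun_prop)]
  have := lintegral_map (μ := (volume : Measure (EuclideanSpace ℝ (Fin d))))
    (f := fun z => ENNReal.ofReal (gaussDensity d s z * g z)) (g := fun w => √s • w)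
    (by fun_prop) (by fun_prop)
  rw [← this, key, lintegral_smul_measure, smul_eq_mul, ← mul_assoc, ← ENNReal.ofReal_mul (by positivity)]
  rw [abs_of_nonneg (by positivity), finrank_euclideanSpace_fin, mul_inv_cancel₀ (by positivity)]
  simp

lemma gauss_lint_fin (d : ℕ) (C : ℝ) :
    ∫⁻ w : EuclideanSpace ℝ (Fin d), ENNReal.ofReal (C * Real.exp (-(1 / 4) * ‖w‖ ^ 2)) ≠ ⊤ := by
  have h := (GaussianFourier.integrable_cexp_neg_mul_sq_norm_add
    (V := EuclideanSpace ℝ (Fin d)) (b := (1 / 4 : ℂ)) (by norm_num) 0 0).norm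
  have h' : Integrable (fun w : EuclideanSpace ℝ (Fin d) => C * Real.exp (-(1 / 4) * ‖w‖ ^ 2)) := by
    refine (h.const_mul C).congr (ae_of_all _ fun w => ?_)
    have : (-(1 / 4 : ℂ) * (‖w‖ : ℂ) ^ 2 + 0 * (inner ℝ (0 : EuclideanSpace ℝ (Fin d)) w : ℝ))
      = ((-(1 / 4) * ‖w‖ ^ 2 : ℝ) : ℂ) := by push_cast; ring
    simp only [this, Complex.norm_exp_ofReal]
  exact h'.lintegral_lt_top.ne

/-- **Uniform smoothing estimate (from the proof of Theorem 8.1).** Let `d ≥ 1`, `t > 0`,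
and let `μ` be σ-finite on `ℝ^d` with `μ p_{2t} < ∞`. Then
`sup_{h ≤ h' ≤ 2h} ∫ μ(dy) ∫ p_{h'}(z) |p_{t-h}(y - z) - p_t(y)| dz → 0`
as `h → 0⁺` (with `0 < h < t/2`). -/
theorem gauss_uniform_smoothing (d : ℕ) (hd : 1 ≤ d) (t : ℝ) (ht : 0 < t)
    (μ : Measure (EuclideanSpace ℝ (Fin d))) [SigmaFinite μ]
    (hμ : ∫⁻ u, ENNReal.ofReal (gaussDensity d (2 * t) u) ∂μ < ⊤) :
    Tendsto (fun h : ℝ => ⨆ h' ∈ Set.Icc h (2 * h),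
        ∫⁻ y, ∫⁻ z, ENNReal.ofReal (gaussDensity d h' z *
          |gaussDensity d (t - h) (y - z) - gaussDensity d t y|) ∂volume ∂μ)
      (nhdsWithin 0 (Set.Ioo 0 (t / 2))) (nhds 0) := by
  set S : Set (ℝ × ℝ) := {q | 0 < q.1 ∧ q.1 < t / 2 ∧ 0 < q.2 ∧ q.2 ≤ t / 2} with hS
  set F : ℝ × ℝ → EuclideanSpace ℝ (Fin d) × EuclideanSpace ℝ (Fin d) → ENNReal := fun q p =>
    ENNReal.ofReal (gaussDensity d 1 p.2 *
      |gaussDensity d (t - q.1) (p.1 - √q.2 • p.2) - gaussDensity d t p.1|) with hF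
  have hFm : ∀ q, Measurable (F q) := by
    intro q
    have c1 := continuous_gaussDensity' d 1
    have c2 := continuous_gaussDensity' d (t - q.1)
    have c3 := continuous_gaussDensity' d t
    apply Continuous.measurable
    simp only [hF]
    refine ENNReal.continuous_ofReal.comp ?_
    fun_prop
  have hG : ∀ q ∈ S, ∫⁻ y, ∫⁻ z, ENNReal.ofReal (gaussDensity d q.2 z *
          |gaussDensity d (t - q.1) (y - z) - gaussDensity d t y|) ∂volume ∂μ
      = ∫⁻ p, F q p ∂(μ.prod volume) := by
    intro q hq
    rw [lintegral_prod _ (hFm q).aemeasurable]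
    refine lintegral_congr fun y => ?_
    have c2 := continuous_gaussDensity' d (t - q.1)
    exact gauss_cov d hq.2.2.1
      (fun z => |gaussDensity d (t - q.1) (y - z) - gaussDensity d t y|)
      (Continuous.measurable (by fun_prop))
  have hlim : Tendsto (fun q => ∫⁻ p, F q p ∂(μ.prod volume)) (nhdsWithin (0, 0) S) (nhds 0) := by
    rw [show (0 : ENNReal) = ∫⁻ p : EuclideanSpace ℝ (Fin d) × EuclideanSpace ℝ (Fin d), 0
      ∂(μ.prod volume) by simp]
    refine tendsto_lintegral_filter_of_dominated_convergence
      (fun p => ENNReal.ofReal (gaussDensity d (2 * t) p.1) * ENNReal.ofReal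
        ((2 * Real.pi * 1) ^ (-(d : ℝ) / 2) *
        (Real.pi * t) ^ (-(d : ℝ) / 2) / (2 * Real.pi * (2 * t)) ^ (-(d : ℝ) / 2) *
          Real.exp (-(1 / 4) * ‖p.2‖ ^ 2))) (Eventually.of_forall hFm) ?_ ?_ ?_
    · filter_upwards [self_mem_nhdsWithin] with q hq
      refine ae_of_all _ fun p => ?_
      rw [← ENNReal.ofReal_mul (gaussDensity_nonneg' d (by positivity) _)]
      exact ENNReal.ofReal_le_ofReal
        (gauss_dom d ht hq.1.le hq.2.1 hq.2.2.1.le hq.2.2.2 p.1 p.2)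
    · have hm := (continuous_gaussDensity' d (2 * t)).measurable
      rw [lintegral_prod_mul (f := fun y => ENNReal.ofReal (gaussDensity d (2 * t) y))
        (g := fun w : EuclideanSpace ℝ (Fin d) => ENNReal.ofReal
        ((2 * Real.pi * 1) ^ (-(d : ℝ) / 2) *
        (Real.pi * t) ^ (-(d : ℝ) / 2) / (2 * Real.pi * (2 * t)) ^ (-(d : ℝ) / 2) *
          Real.exp (-(1 / 4) * ‖w‖ ^ 2))) (by fun_prop) (by fun_prop)]
      exact ENNReal.mul_ne_top hμ.ne (gauss_lint_fin d _)
    · refine ae_of_all _ fun p => ?_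
      have hc : ContinuousAt (fun q : ℝ × ℝ => F q p) (0, 0) := by
        simp only [hF, gaussDensity]
        refine ENNReal.continuous_ofReal.continuousAt.comp ?_
        refine continuousAt_const.mul (ContinuousAt.abs (ContinuousAt.sub ?_ continuousAt_const))
        refine ContinuousAt.mul ?_ ?_
        · refine ContinuousAt.rpow_const (by fun_prop) (Or.inl ?_)
          simp; exact ht.ne'
        · refine Real.continuous_exp.continuousAt.comp (ContinuousAt.div ?_ (by fun_prop) ?_)
          · apply Continuous.continuousAt
            fun_prop
          · simp; exact ht.ne'
      have h0 : F (0, 0) p = 0 := by simp [hF]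
      have := hc.tendsto
      rw [h0] at this
      exact this.mono_left nhdsWithin_le_nhds
  rw [ENNReal.tendsto_nhds_zero] at hlim ⊢
  intro ε hε
  have h1 := hlim ε hε
  rw [eventually_nhdsWithin_iff, Metric.eventually_nhds_iff] at h1
  obtain ⟨δ, hδ, h1⟩ := h1
  have hev : ∀ᶠ h : ℝ in nhdsWithin 0 (Set.Ioo 0 (t / 2)), h < min (δ / 2) (t / 4) :=
    nhdsWithin_le_nhds (Iio_mem_nhds (by positivity))
  filter_upwards [self_mem_nhdsWithin, hev] with h hh hm
  rw [lt_min_iff] at hm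
  refine iSup₂_le fun h' hh' => ?_
  obtain ⟨a1, a2⟩ := hh
  obtain ⟨b1, b2⟩ := hh'
  have hq : (h, h') ∈ S := ⟨a1, a2, by simp only; linarith, by simp only; linarith⟩
  rw [hG (h, h') hq]
  refine h1 ?_ hq
  rw [Prod.dist_eq, max_lt_iff]
  simp only [Real.dist_eq, sub_zero]
  rw [abs_of_pos a1, abs_of_pos (by linarith : 0 < h')]
  constructor <;> linarith
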